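/- arXiv:1909.11847 — 8 statements merged into one kernel-verified Lean document; each statement's English description precedes it below -/
import Mathlib

section
/- For every pliable-index-coding problem P(m,U) and every field size q, β_q(P(m,U)) ≥ m − max over all decoding choices D of (min over all decoding chains (c_1,…,c_m) for D of the size of the skipped-message set S of that chain). -/
/-! Fix a code `E` of minimum length `ℓ`, and let `D` be the decoding choice its receivers make.
Following any decoding chain `c` for `D`, the codeword together with the messages in the skipped
set `S` determines every message in turn: `c_{k+1}` is either skipped, hence known, or decoded by
receiver `C_k` from the codeword and messages already recovered. So `x ↦ (E x, x_S)` is injective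
(`eq_of_chain`) and counting gives `m ≤ ℓ + |S|` (`le_length_add_skipped`). Applying this to a chain
with smallest `S` proves the bound. That the minimum is over a nonempty set follows by growing a
chain greedily (`exists_decodingChain`), and the identity code shows that some code exists. -/


/-- `E` is a valid pliable index code for the problem with `m` messages over the field `F`
and receiver set `U`: every present receiver `H ∈ U` can decode some message `Xᵢ` with
`i ∉ H` from the codeword and its side information `X_H`. The codeword coordinates are
indexed by an arbitrary type `ι`. -/
def IsPliableCode (F : Type) [Field F] {m : ℕ} (U : Set (Set (Fin m)))
    {ι : Type} (E : (Fin m → F) → ι → F) : Prop :=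
  ∀ H ∈ U, ∃ i : Fin m, i ∉ H ∧ ∃ dec : (ι → F) → (H → F) → F,
    ∀ x : Fin m → F, dec (E x) (fun j => x j.1) = x i

/-- `β_q(P(m,U))`: the minimum length `ℓ` of a pliable index code for the problem. -/
noncomputable def pliableRate (F : Type) [Field F] (m : ℕ)
    (U : Set (Set (Fin m))) : ℕ :=
  sInf {ℓ : ℕ | ∃ E : (Fin m → F) → Fin ℓ → F, IsPliableCode F U E}

/-- `C_k = {c_1, …, c_k}`: the first `k` messages of the chain `c`. -/
def chainPrefix {m : ℕ} (c : Fin m → Fin m) (k : ℕ) : Set (Fin m) :=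
  {i | ∃ j : Fin m, (j : ℕ) < k ∧ c j = i}

/-- `c` is a decoding chain for the decoding choice `D`: an ordering `c_1, …, c_m` of all
messages such that whenever the prefix `C_k` is a present receiver, the next message is
the one that receiver `C_k` decodes, namely `D(C_k)`. -/
def IsDecodingChain {m : ℕ} (U : Set (Set (Fin m))) (D : Set (Fin m) → Fin m)
    (c : Fin m → Fin m) : Prop :=
  Function.Bijective c ∧
    ∀ k : Fin m, chainPrefix c (k : ℕ) ∈ U → c k = D (chainPrefix c (k : ℕ))

/-- The skipped-message set of the chain `c`: those `c_{k+1}` added when the prefix `C_k`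
is an absent receiver. -/
def skippedSet {m : ℕ} (U : Set (Set (Fin m))) (c : Fin m → Fin m) : Set (Fin m) :=
  {i | ∃ k : Fin m, chainPrefix c (k : ℕ) ∉ U ∧ c k = i}

/-- The prefixes of the greedy chain: starting from `∅`, repeatedly add the message `D` picks. -/
def greedyPrefix {m : ℕ} (D : Set (Fin m) → Fin m) : ℕ → Set (Fin m)
  | 0 => ∅
  | k + 1 => insert (D (greedyPrefix D k)) (greedyPrefix D k)

theorem mem_greedyPrefix {m : ℕ} (D : Set (Fin m) → Fin m) (k : ℕ) (i : Fin m) :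
    i ∈ greedyPrefix D k ↔ ∃ j < k, D (greedyPrefix D j) = i := by
  induction k with
  | zero => simp [greedyPrefix]
  | succ k ih =>
    simp only [greedyPrefix, Set.mem_insert_iff, ih, Nat.lt_succ_iff_lt_or_eq]
    grind

theorem ncard_greedyPrefix_le {m : ℕ} (D : Set (Fin m) → Fin m) (k : ℕ) :
    (greedyPrefix D k).ncard ≤ k := by
  induction k with
  | zero => simp [greedyPrefix]
  | succ k ih => exact (Set.ncard_insert_le _ _).trans (by omega)

theorem exists_decodingChain {m : ℕ} (U : Set (Set (Fin m))) (D : Set (Fin m) → Fin m)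
    (hD : ∀ H, H ≠ Set.univ → D H ∉ H) : ∃ c, IsDecodingChain U D c := by
  have hne : ∀ k < m, greedyPrefix D k ≠ Set.univ := by
    intro k hk h
    have := ncard_greedyPrefix_le D k
    rw [h, Set.ncard_univ, Nat.card_eq_fintype_card, Fintype.card_fin] at this
    omega
  refine ⟨fun k => D (greedyPrefix D k), ?_, ?_⟩
  · apply Finite.injective_iff_bijective.mp
    have key : ∀ i j : Fin m, i < j → D (greedyPrefix D i) ≠ D (greedyPrefix D j) := by
      intro i j hij h
      exact hD _ (hne j j.2) ((mem_greedyPrefix D j _).2 ⟨i, hij, h⟩)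
    intro i j h
    rcases lt_trichotomy i j with hij | hij | hij
    · exact absurd h (key i j hij)
    · exact hij
    · exact absurd h.symm (key j i hij)
  · intro k _
    have : chainPrefix (fun k : Fin m => D (greedyPrefix D k)) k = greedyPrefix D k := by
      ext i
      rw [mem_greedyPrefix]
      constructor
      · rintro ⟨j, hj, rfl⟩
        exact ⟨j, hj, rfl⟩
      · rintro ⟨j, hj, rfl⟩
        exact ⟨⟨j, hj.trans k.2⟩, hj, rfl⟩
    rw [this]

/-- The codeword and the skipped messages determine all messages. -/
theorem eq_of_chain {F : Type} {m : ℕ} {U : Set (Set (Fin m))} {ι : Type}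
    {E : (Fin m → F) → ι → F} {D : Set (Fin m) → Fin m}
    (hdec : ∀ H ∈ U, ∃ dec : (ι → F) → (H → F) → F,
      ∀ x : Fin m → F, dec (E x) (fun j => x j.1) = x (D H))
    {c : Fin m → Fin m} (hc : IsDecodingChain U D c) {x y : Fin m → F}
    (hE : E x = E y) (hS : ∀ i ∈ skippedSet U c, x i = y i) : x = y := by
  have key : ∀ k : Fin m, x (c k) = y (c k) := by
    intro k
    induction k using WellFoundedLT.induction with
    | ind k ih =>
      by_cases hk : chainPrefix c k ∈ U
      · obtain ⟨dec, hd⟩ := hdec _ hk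
        rw [hc.2 k hk, ← hd x, ← hd y, hE]
        congr 1
        ext ⟨_, j, hj, rfl⟩
        exact ih j hj
      · exact hS _ ⟨k, hk, rfl⟩
  ext i
  obtain ⟨k, rfl⟩ := hc.1.2 i
  exact key k

theorem le_length_add_skipped {F : Type} [Field F] [Fintype F] {m ℓ : ℕ}
    {U : Set (Set (Fin m))} {E : (Fin m → F) → Fin ℓ → F} {D : Set (Fin m) → Fin m}
    (hdec : ∀ H ∈ U, ∃ dec : (Fin ℓ → F) → (H → F) → F,
      ∀ x : Fin m → F, dec (E x) (fun j => x j.1) = x (D H))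
    {c : Fin m → Fin m} (hc : IsDecodingChain U D c) :
    m ≤ ℓ + (skippedSet U c).ncard := by
  have hinj : Function.Injective
      (fun x : Fin m → F => (E x, fun i : skippedSet U c => x i.1)) := by
    intro x y h
    obtain ⟨h1, h2⟩ := Prod.mk.inj h
    exact eq_of_chain hdec hc h1 fun i hi => congrFun h2 ⟨i, hi⟩
  have hcard := Nat.card_le_card_of_injective _ hinj
  simp only [Nat.card_prod, Nat.card_fun, Nat.card_fin, Nat.card_coe_set_eq, ← pow_add] at hcard
  exact (Nat.pow_le_pow_iff_right Finite.one_lt_card).1 hcard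

theorem exists_pliableCode (F : Type) [Field F] {m : ℕ} {U : Set (Set (Fin m))}
    (hU : ∀ H ∈ U, H ≠ Set.univ) :
    ∃ E : (Fin m → F) → Fin m → F, IsPliableCode F U E := by
  refine ⟨id, fun H hH => ?_⟩
  obtain ⟨i, hi⟩ := (Set.ne_univ_iff_exists_notMem H).1 (hU H hH)
  exact ⟨i, hi, fun z _ => z i, fun _ => rfl⟩

/-- β_q(P(m,U)) ≥ m − max over decoding choices D of the minimum size of the
skipped-message set over all decoding chains for D. -/
theorem pliableRate_ge_sub_maxmin_skipped
    (F : Type) [Field F] [Fintype F] (m : ℕ) (U : Set (Set (Fin m)))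
    (hU : ∀ H ∈ U, H ≠ Set.univ) :
    m - sSup {n : ℕ | ∃ D : Set (Fin m) → Fin m, (∀ H ∈ U, D H ∉ H) ∧
          n = sInf {s : ℕ | ∃ c : Fin m → Fin m,
            IsDecodingChain U D c ∧ s = (skippedSet U c).ncard}}
      ≤ pliableRate F m U := by
  -- For `m = 0` there is no map `D` at all, but the left-hand side is `0`.
  rcases Nat.eq_zero_or_pos m with rfl | hm
  · simp
  obtain ⟨E, hE⟩ : ∃ E : (Fin m → F) → Fin (pliableRate F m U) → F, IsPliableCode F U E :=
    Nat.sInf_mem (s := {ℓ : ℕ | ∃ E : (Fin m → F) → Fin ℓ → F, IsPliableCode F U E})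
      ⟨m, exists_pliableCode F hU⟩
  -- `D` also avoids `H` for absent `H ≠ univ`, so that it drives the greedy chain.
  have hch : ∀ H : Set (Fin m), ∃ i : Fin m, (H ≠ Set.univ → i ∉ H) ∧
      (H ∈ U → ∃ dec : (Fin (pliableRate F m U) → F) → (H → F) → F,
        ∀ x : Fin m → F, dec (E x) (fun j => x j.1) = x i) := by
    intro H
    by_cases hH : H ∈ U
    · obtain ⟨i, hi, hd⟩ := hE H hH
      exact ⟨i, fun _ => hi, fun _ => hd⟩
    · by_cases hu : H = Set.univ
      · exact ⟨⟨0, hm⟩, fun h => absurd hu h, fun h => absurd h hH⟩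
      · obtain ⟨i, hi⟩ := (Set.ne_univ_iff_exists_notMem H).1 hu
        exact ⟨i, fun _ => hi, fun h => absurd h hH⟩
  choose D hD hdec using hch
  obtain ⟨c₀, hc₀⟩ := exists_decodingChain U D hD
  obtain ⟨c, hc, hmin⟩ := Nat.sInf_mem (s := {s : ℕ | ∃ c : Fin m → Fin m,
    IsDecodingChain U D c ∧ s = (skippedSet U c).ncard}) ⟨_, c₀, hc₀, rfl⟩
  have hbound := le_length_add_skipped hdec hc
  have hncard : ∀ S : Set (Fin m), S.ncard ≤ m := fun S => by
    simpa using Set.ncard_le_card S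
  have hsup := le_csSup (s := {n : ℕ | ∃ D : Set (Fin m) → Fin m, (∀ H ∈ U, D H ∉ H) ∧
      n = sInf {s : ℕ | ∃ c : Fin m → Fin m,
        IsDecodingChain U D c ∧ s = (skippedSet U c).ncard}})
    (by
      refine ⟨m, ?_⟩
      rintro n ⟨D', -, rfl⟩
      -- The infimum of an empty set of naturals is `0`, so it is at most `m` in either case.
      rcases Set.eq_empty_or_nonempty {s : ℕ | ∃ c : Fin m → Fin m,
        IsDecodingChain U D' c ∧ s = (skippedSet U c).ncard} with h | h
      · simp [h]
      · obtain ⟨c', -, h'⟩ := Nat.sInf_mem h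
        exact h' ▸ hncard _)
    ⟨D, fun H hH => hD H (hU H hH), rfl⟩
  omega
end

section
/- (Achievability via a cyclic code) Let P(m,U) be a pliable-index-coding problem with at least one absent receiver, i.e., there exists H ⊊ [1:m] with H ∉ U. Then for every field size q, β_q(P(m,U)) ≤ m − 1. Concretely, fixing such an H, the code that sends each X_i for i ∈ H uncoded together with the cyclic code (X_{j_1}+X_{j_2}, X_{j_2}+X_{j_3}, …, X_{j_{r−1}}+X_{j_r}) on the messages {j_1,…,j_r} = [1:m] \ H is a valid pliable index code of length m − 1. -/
/-- Discrete intermediate value principle: a non-constant predicate on `Fin r` changes its value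
between two consecutive indices. -/
lemma exists_adjacent_change {r : ℕ} (P : Fin r → Prop) {a b : Fin r} (ha : P a) (hb : ¬ P b) :
    ∃ (n : ℕ) (h : n + 1 < r), ¬ (P ⟨n, by omega⟩ ↔ P ⟨n + 1, h⟩) := by
  by_contra! hcon
  have hconst : ∀ (n : ℕ) (h : n < r), (P ⟨n, h⟩ ↔ P ⟨0, by omega⟩) := by
    intro n
    induction n with
    | zero => exact fun _ => Iff.rfl
    | succ k ih => exact fun h => (hcon k h).symm.trans (ih (by omega))
  exact hb ((hconst b.1 b.2).2 ((hconst a.1 a.2).1 ha))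

lemma IsPliableCode.reindex {F : Type} [Field F] {m : ℕ} {U : Set (Set (Fin m))} {ι κ : Type}
    {E : (Fin m → F) → ι → F} (hE : IsPliableCode F U E) (e : κ ≃ ι) :
    IsPliableCode F U (fun x k => E x (e k)) := by
  intro K hK
  obtain ⟨i, hi, dec, hdec⟩ := hE K hK
  refine ⟨i, hi, fun c s => dec (fun t => c (e.symm t)) s, fun x => ?_⟩
  simpa using hdec x

/-- The rate is at most the number of codeword coordinates of any valid code. -/
lemma IsPliableCode.pliableRate_le {F : Type} [Field F] {m : ℕ} {U : Set (Set (Fin m))}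
    {ι : Type} [Fintype ι] {E : (Fin m → F) → ι → F} (hE : IsPliableCode F U E) :
    pliableRate F m U ≤ Fintype.card ι :=
  Nat.sInf_le ⟨_, hE.reindex (Fintype.equivFin ι).symm⟩

/-- Achievability via a cyclic code: if some receiver H ⊊ [1:m] is absent,
then the code sending X_i uncoded for i ∈ H together with the cyclic code
(X_{j_1}+X_{j_2}, …, X_{j_{r-1}}+X_{j_r}) on {j_1 < … < j_r} = [1:m] \ H is a valid
pliable index code of length m − 1; hence β_q(P(m,U)) ≤ m − 1. -/
theorem cyclic_code_achieves_m_sub_one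
    (F : Type) [Field F] [Fintype F] (m : ℕ) (U : Set (Set (Fin m)))
    (hU : ∀ H ∈ U, H ≠ Set.univ)
    (H : Finset (Fin m)) (hHproper : (H : Set (Fin m)) ≠ Set.univ)
    (hHabs : (H : Set (Fin m)) ∉ U) :
    IsPliableCode F U
      (fun (x : Fin m → F) =>
        Sum.elim
          (fun (j : {a // a ∈ H}) => x j.1)
          (fun (j : Fin (Hᶜ.card - 1)) =>
            x ((Hᶜ.orderIsoOfFin rfl) (Fin.castLE (Nat.sub_le _ 1) j)).1
              + x ((Hᶜ.orderIsoOfFin rfl) ⟨j.1 + 1, by have := j.2; omega⟩).1))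
      ∧ Fintype.card ({a // a ∈ H} ⊕ Fin (Hᶜ.card - 1)) = m - 1
      ∧ pliableRate F m U ≤ m - 1 := by
  have hcard : Fintype.card ({a // a ∈ H} ⊕ Fin (Hᶜ.card - 1)) = m - 1 := by
    have hlt : H.card < m := by
      have h := Finset.card_lt_univ_of_notMem
        (s := H) ((Set.ne_univ_iff_exists_notMem _).1 hHproper).choose_spec
      simpa using h
    have hc : Hᶜ.card = m - H.card := by simp [Finset.card_compl]
    simp only [Fintype.card_sum, Fintype.card_coe, Fintype.card_fin, hc]
    omega
  suffices hE : IsPliableCode F U _ from ⟨hE, hcard, hcard ▸ hE.pliableRate_le⟩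
  intro K hK
  by_cases hHK : (H : Set (Fin m)) ⊆ K
  · set f := Hᶜ.orderIsoOfFin rfl
    obtain ⟨a, haK, haH⟩ : ∃ a ∈ K, a ∉ (H : Set (Fin m)) := by
      by_contra! hcon
      exact hHabs (hHK.antisymm hcon ▸ hK)
    obtain ⟨b, hbK⟩ := (Set.ne_univ_iff_exists_notMem K).1 (hU K hK)
    have haH' : a ∈ Hᶜ := by simpa using haH
    have hbH' : b ∈ Hᶜ := by
      simpa using fun h => hbK (hHK h)
    obtain ⟨n, hn, hchange⟩ := exists_adjacent_change (fun t => (f t).1 ∈ K)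
      (a := f.symm ⟨a, haH'⟩) (b := f.symm ⟨b, hbH'⟩) (by simpa using haK) (by simpa using hbK)
    let k : Fin (Hᶜ.card - 1) := ⟨n, by omega⟩
    by_cases h0 : (f ⟨n, by omega⟩).1 ∈ K
    · have h1 : (f ⟨n + 1, hn⟩).1 ∉ K := fun h => hchange (iff_of_true h0 h)
      exact ⟨_, h1, fun c s => c (Sum.inr k) - s ⟨_, h0⟩, fun x => add_sub_cancel_left _ _⟩
    · have h1 : (f ⟨n + 1, hn⟩).1 ∈ K := by
        by_contra h
        exact hchange (iff_of_false h0 h)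
      exact ⟨_, h0, fun c s => c (Sum.inr k) - s ⟨_, h1⟩, fun x => add_sub_cancel_right _ _⟩
  · obtain ⟨i, hiH, hiK⟩ := Set.not_subset.1 hHK
    exact ⟨i, hiK, fun c _ => c (Sum.inl ⟨i, hiH⟩), fun _ => rfl⟩
end

section
/- Let P(m,U) be a pliable-index-coding problem whose set of absent receivers U^abs is nonempty and satisfies ⋃_{H ∈ U^abs} H ≠ [1:m]. Then for every field size q, β_q(P(m,U)) = m − 1. -/
/-- If every proper subset containing `k` is a receiver, then the message `X_k` together with the
codeword determines all messages. -/
lemma IsPliableCode.injective {F : Type} [Field F] {m : ℕ} {U : Set (Set (Fin m))}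
    {ι : Type} {E : (Fin m → F) → ι → F} (hE : IsPliableCode F U E) {k : Fin m}
    (hk : ∀ H : Set (Fin m), k ∈ H → H ≠ Set.univ → H ∈ U) :
    Function.Injective (fun x : Fin m → F => (x k, E x)) := by
  intro x y hxy
  obtain ⟨hxk, hExy⟩ := Prod.ext_iff.mp hxy
  by_contra hne
  have hA : {j | x j = y j} ≠ Set.univ := fun h =>
    hne (funext fun j => (Set.ext_iff.mp h j).mpr trivial)
  obtain ⟨i, hi, dec, hdec⟩ := hE _ (hk {j | x j = y j} hxk hA)
  apply hi
  have hside : (fun j : {j | x j = y j} => x j.1) = fun j => y j.1 := funext fun j => j.2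
  have hx := hdec x
  rw [show E x = E y from hExy, hside, hdec y] at hx
  exact hx.symm

open Classical in
/-- The code sending the messages of `H₀` uncoded and those outside `H₀` as differences with
`X_{i₀}`; the coordinates are the indices other than `i₀`, enumerated by `i₀.succAbove`. -/
noncomputable def differenceCode (F : Type) [Field F] {n : ℕ} (H₀ : Set (Fin (n + 1)))
    (i₀ : Fin (n + 1)) (x : Fin (n + 1) → F) (t : Fin n) : F :=
  if i₀.succAbove t ∈ H₀ then x (i₀.succAbove t) else x (i₀.succAbove t) - x i₀

lemma differenceCode_isPliableCode (F : Type) [Field F] {n : ℕ} {U : Set (Set (Fin (n + 1)))}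
    (hU : ∀ H ∈ U, H ≠ Set.univ) {H₀ : Set (Fin (n + 1))} (hH₀ : H₀ ∉ U)
    {i₀ : Fin (n + 1)} (hi₀ : i₀ ∉ H₀) :
    IsPliableCode F U (differenceCode F H₀ i₀) := by
  intro H hH
  by_cases hsub : H₀ ⊆ H
  · by_cases hiH : i₀ ∈ H
    · obtain ⟨j, hj⟩ := (Set.ne_univ_iff_exists_notMem H).mp (hU H hH)
      obtain ⟨t, rfl⟩ := Fin.exists_succAbove_eq (x := j) (y := i₀) (by rintro rfl; exact hj hiH)
      refine ⟨_, hj, fun c s => c t + s ⟨i₀, hiH⟩, fun x => ?_⟩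
      simp [differenceCode, show i₀.succAbove t ∉ H₀ from fun h => hj (hsub h)]
    · obtain ⟨j, hjH, hj⟩ : ∃ j ∈ H, j ∉ H₀ := by
        by_contra! h
        exact hH₀ (hsub.antisymm h ▸ hH)
      obtain ⟨t, rfl⟩ := Fin.exists_succAbove_eq (x := j) (y := i₀) (by rintro rfl; exact hiH hjH)
      refine ⟨i₀, hiH, fun c s => s ⟨_, hjH⟩ - c t, fun x => ?_⟩
      simp [differenceCode, hj]
  · obtain ⟨j, hj, hjH⟩ := Set.not_subset.mp hsub
    obtain ⟨t, rfl⟩ := Fin.exists_succAbove_eq (x := j) (y := i₀) (by rintro rfl; exact hi₀ hj)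
    exact ⟨_, hjH, fun c _ => c t, fun x => by simp [differenceCode, hj]⟩

/-- if the set of absent receivers is nonempty and the union of all absent
receivers is not all of [1:m], then β_q(P(m,U)) = m − 1. -/
theorem pliableRate_eq_m_sub_one_of_union_ne_univ
    (F : Type) [Field F] [Fintype F] (m : ℕ) (U : Set (Set (Fin m)))
    (hU : ∀ H ∈ U, H ≠ Set.univ)
    (hne : {H : Set (Fin m) | H ≠ Set.univ ∧ H ∉ U}.Nonempty)
    (hunion : ⋃₀ {H : Set (Fin m) | H ≠ Set.univ ∧ H ∉ U} ≠ Set.univ) :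
    pliableRate F m U = m - 1 := by
  obtain ⟨H₀, hH₀, hH₀U⟩ := hne
  obtain ⟨i₀, hi₀⟩ := (Set.ne_univ_iff_exists_notMem H₀).mp hH₀
  obtain ⟨k, hk⟩ := (Set.ne_univ_iff_exists_notMem _).mp hunion
  have hk' : ∀ H : Set (Fin m), k ∈ H → H ≠ Set.univ → H ∈ U := fun H hkH hH => by
    by_contra hHU
    exact hk ⟨H, ⟨hH, hHU⟩, hkH⟩
  cases m with
  | zero => exact i₀.elim0
  | succ n =>
    have hmem : n ∈ {ℓ : ℕ | ∃ E : (Fin (n + 1) → F) → Fin ℓ → F, IsPliableCode F U E} :=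
      ⟨_, differenceCode_isPliableCode F hU hH₀U hi₀⟩
    refine le_antisymm (Nat.sInf_le hmem) (le_csInf ⟨n, hmem⟩ ?_)
    rintro ℓ ⟨E, hE⟩
    classical
    have hcard := Fintype.card_le_of_injective _ (hE.injective hk')
    simp only [Fintype.card_prod, Fintype.card_fun, Fintype.card_fin, ← pow_succ'] at hcard
    have := (Nat.pow_le_pow_iff_right Fintype.one_lt_card).mp hcard
    omega
end

section
/- (No nested absent pair) Let P(m,U) be a pliable-index-coding problem whose set of absent receivers U^abs is nonempty and such that J ⊄ K for all distinct J, K ∈ U^abs (no absent receiver is a subset of another). Then for every field size q, β_q(P(m,U)) = m − 1. -/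
/-- Two inputs with the same codeword never agree exactly on a present receiver's side
information. -/
lemma agreement_notMem {F : Type} [Field F] {m : ℕ} {U : Set (Set (Fin m))} {ι : Type}
    {E : (Fin m → F) → ι → F} (hE : IsPliableCode F U E) {x y : Fin m → F} (h : E x = E y) :
    {i | x i = y i} ∉ U := by
  intro hA
  obtain ⟨i, hi, dec, hdec⟩ := hE _ hA
  refine hi ?_
  have hside : (fun j : {i | x i = y i} => x j.1) = fun j => y j.1 := funext fun j => j.2
  change x i = y i
  rw [← hdec x, ← hdec y, h, hside]

/-- When the absent receivers form an antichain, the codeword and one fixed message determine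
all messages. -/
lemma exists_coord_determining {F : Type} [Field F] {m : ℕ} {U : Set (Set (Fin m))} {ι : Type}
    {E : (Fin m → F) → ι → F} (hE : IsPliableCode F U E) (i₀ : Fin m)
    (hnn : ∀ J ∈ {H : Set (Fin m) | H ≠ Set.univ ∧ H ∉ U},
      ∀ K ∈ {H : Set (Fin m) | H ≠ Set.univ ∧ H ∉ U}, J ≠ K → ¬ J ⊆ K) :
    ∃ i : Fin m, ∀ x y, E x = E y → x i = y i → x = y := by
  let D : Set (Fin m) := {j | ∀ x y, E x = E y → x j = y j}
  by_cases hD : D = Set.univ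
  · refine ⟨i₀, fun x y h _ => funext fun j => ?_⟩
    have hj : j ∈ D := hD ▸ Set.mem_univ j
    exact hj x y h
  have hDU : D ∉ U := by
    intro hmem
    obtain ⟨i, hi, dec, hdec⟩ := hE _ hmem
    refine hi fun x y h => ?_
    have hside : (fun j : D => x j.1) = fun j => y j.1 := funext fun j => j.2 x y h
    rw [← hdec x, ← hdec y, h, hside]
  obtain ⟨i, hi⟩ := (Set.ne_univ_iff_exists_notMem D).1 hD
  refine ⟨i, fun x y h hxy => ?_⟩
  by_contra hne
  have hA : {j | x j = y j} ≠ Set.univ := fun hu =>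
    hne (funext fun j => (hu ▸ Set.mem_univ j : j ∈ {j | x j = y j}))
  refine hnn D ⟨hD, hDU⟩ _ ⟨hA, agreement_notMem hE h⟩ ?_ fun j hj => hj x y h
  intro heq
  exact hi (heq ▸ hxy)

/-- One absent receiver `J` suffices to save one symbol: send the messages in `J` uncoded and
the differences of the remaining ones with `X_{i₀}`. -/
lemma exists_code_of_notMem (F : Type) [Field F] {m : ℕ} {U : Set (Set (Fin m))}
    (hU : ∀ H ∈ U, H ≠ Set.univ) {J : Set (Fin m)} (hJ : J ∉ U) {i₀ : Fin m} (hi₀ : i₀ ∉ J) :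
    ∃ E : (Fin m → F) → Fin (m - 1) → F, IsPliableCode F U E := by
  classical
  have hcard : Fintype.card {i : Fin m // i ≠ i₀} = m - 1 := by
    simp [Fintype.card_subtype_compl]
  let e : {i : Fin m // i ≠ i₀} ≃ Fin (m - 1) := Fintype.equivFinOfCardEq hcard
  let E : (Fin m → F) → Fin (m - 1) → F := fun x k =>
    if (e.symm k).1 ∈ J then x (e.symm k).1 else x (e.symm k).1 - x i₀
  -- The entry of a codeword attached to `i`, read as `X_{i₀} - X_{i₀} = 0` at `i = i₀`.
  let c : (Fin (m - 1) → F) → Fin m → F := fun w i => if h : i ≠ i₀ then w (e ⟨i, h⟩) else 0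
  have hcJ : ∀ x, ∀ i ∈ J, c (E x) i = x i := by
    intro x i hi
    have : i ≠ i₀ := fun h => hi₀ (h ▸ hi)
    simp [c, E, this, hi]
  have hcN : ∀ x, ∀ i ∉ J, c (E x) i = x i - x i₀ := by
    intro x i hi
    by_cases h : i = i₀
    · simp [c, h]
    · simp [c, E, h, hi]
  refine ⟨E, fun H hH => ?_⟩
  by_cases hJH : J ⊆ H
  · obtain ⟨j, hjH, hjJ⟩ : ∃ j ∈ H, j ∉ J := by
      by_contra! hcon
      exact hJ (hJH.antisymm hcon ▸ hH)
    obtain ⟨i, hi⟩ := (Set.ne_univ_iff_exists_notMem H).1 (hU H hH)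
    refine ⟨i, hi, fun w s => c w i - c w j + s ⟨j, hjH⟩, fun x => ?_⟩
    simp only [hcN x i fun h => hi (hJH h), hcN x j hjJ]
    ring
  · obtain ⟨i, hiJ, hi⟩ := Set.not_subset.1 hJH
    exact ⟨i, hi, fun w _ => c w i, fun x => hcJ x i hiJ⟩

/-- No nested absent pair: if the set of absent receivers is nonempty and no
absent receiver is a subset of another, then β_q(P(m,U)) = m − 1. -/
theorem pliableRate_eq_m_sub_one_of_no_nested_absent_pair
    (F : Type) [Field F] [Fintype F] (m : ℕ) (U : Set (Set (Fin m)))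
    (hU : ∀ H ∈ U, H ≠ Set.univ)
    (hne : {H : Set (Fin m) | H ≠ Set.univ ∧ H ∉ U}.Nonempty)
    (hnonnested : ∀ J ∈ {H : Set (Fin m) | H ≠ Set.univ ∧ H ∉ U},
      ∀ K ∈ {H : Set (Fin m) | H ≠ Set.univ ∧ H ∉ U}, J ≠ K → ¬ J ⊆ K) :
    pliableRate F m U = m - 1 := by
  obtain ⟨J, hJuniv, hJ⟩ := hne
  obtain ⟨i₀, hi₀⟩ := (Set.ne_univ_iff_exists_notMem J).1 hJuniv
  have hcode := exists_code_of_notMem F hU hJ hi₀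
  refine le_antisymm (Nat.sInf_le hcode) (le_csInf ⟨_, hcode⟩ ?_)
  rintro ℓ ⟨E, hE⟩
  obtain ⟨i, hi⟩ := exists_coord_determining hE i₀ hnonnested
  have hinj : Function.Injective fun x : Fin m → F => (E x, x i) := fun x y h =>
    hi x y (Prod.ext_iff.1 h).1 (Prod.ext_iff.1 h).2
  classical
  have hle := Fintype.card_le_of_injective _ hinj
  simp only [Fintype.card_prod, Fintype.card_fun, Fintype.card_fin, ← pow_succ] at hle
  have := (Nat.pow_le_pow_iff_right Fintype.one_lt_card).1 hle
  omega
end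

section
/- (Exactly one nested absent pair) Let P(m,U) be a pliable-index-coding problem whose set of absent receivers U^abs contains exactly one ordered pair (J,K) of distinct elements with J ⊊ K (all other pairs of distinct absent receivers are incomparable under inclusion). Then for every field size q, β_q(P(m,U)) = m − 1. -/
/-- The messages determined by the codeword together with the knowledge of `x a` for `a ∈ A`. -/
def determined {F : Type} {m : ℕ} {ι : Type} (E : (Fin m → F) → ι → F)
    (A : Set (Fin m)) : Set (Fin m) :=
  {j | ∀ x y : Fin m → F, E x = E y → (∀ a ∈ A, x a = y a) → x j = y j}

/-- A present receiver that knows exactly the determined messages would decode a new determined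
one. -/
lemma determined_not_mem {F : Type} [Field F] {m : ℕ} {U : Set (Set (Fin m))} {ι : Type}
    {E : (Fin m → F) → ι → F} (hE : IsPliableCode F U E) (A : Set (Fin m)) :
    determined E A ∉ U := by
  intro hmem
  obtain ⟨i, hi, dec, hdec⟩ := hE _ hmem
  refine hi fun x y hxy hA => ?_
  rw [← hdec x, ← hdec y, hxy]
  congr 1
  funext j
  exact j.2 x y hxy hA

/-- When `(J, K)` is the only nested absent pair, revealing one suitable message on top of the
codeword determines all messages. -/
lemma exists_single_reveal {F : Type} [Field F] {m : ℕ} {U : Set (Set (Fin m))} {ι : Type}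
    {E : (Fin m → F) → ι → F} (hE : IsPliableCode F U E) {J K : Set (Fin m)}
    (hK : K ≠ Set.univ)
    (hJK : J ⊂ K)
    (huniq : ∀ S T : Set (Fin m), S ≠ Set.univ → S ∉ U → T ≠ Set.univ → T ∉ U → S ⊂ T →
      S = J ∧ T = K) :
    ∃ a, determined E {a} = Set.univ := by
  obtain ⟨b, hb⟩ := (Set.ne_univ_iff_exists_notMem K).1 hK
  have hmono (a : Fin m) : determined E ∅ ⊆ determined E {a} :=
    fun j hj x y hxy _ => hj x y hxy (by simp)
  have hself (a : Fin m) : a ∈ determined E {a} := fun x y _ h => h a rfl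
  by_cases hS : determined E ∅ = Set.univ
  · exact ⟨b, Set.univ_subset_iff.1 (hS ▸ hmono b)⟩
  obtain ⟨a, haS, haK⟩ : ∃ a, a ∉ determined E ∅ ∧ (determined E ∅ = J → a ∉ K) := by
    by_cases hSJ : determined E ∅ = J
    · exact ⟨b, fun h => hb (hJK.1 (hSJ ▸ h)), fun _ => hb⟩
    · obtain ⟨a, ha⟩ := (Set.ne_univ_iff_exists_notMem _).1 hS
      exact ⟨a, ha, fun h => absurd h hSJ⟩
  refine ⟨a, by_contra fun hT => ?_⟩
  obtain ⟨h1, h2⟩ := huniq _ _ hS (determined_not_mem hE ∅) hT (determined_not_mem hE {a})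
    ⟨hmono a, fun h => haS (h (hself a))⟩
  exact haK h1 (h2 ▸ hself a)

/-- A single absent receiver `J` already allows a code of length `m - 1`. -/
lemma exists_code_of_absent (F : Type) [Field F] {m : ℕ} {U : Set (Set (Fin m))}
    (hU : ∀ H ∈ U, H ≠ Set.univ) {J : Set (Fin m)} (hJ : J ≠ Set.univ) (hJU : J ∉ U) :
    ∃ E : (Fin m → F) → Fin (m - 1) → F, IsPliableCode F U E := by
  classical
  obtain ⟨k, hk⟩ := (Set.ne_univ_iff_exists_notMem J).1 hJ
  have e : {j : Fin m // j ≠ k} ≃ Fin (m - 1) :=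
    Fintype.equivFinOfCardEq (by simp [Fintype.card_subtype_compl])
  refine ⟨fun x t => if (e.symm t).1 ∈ J then x (e.symm t).1 else x (e.symm t).1 - x k, ?_⟩
  intro G hG
  by_cases hkG : k ∈ G
  · -- Any missing message is decodable, since `x k` is known.
    obtain ⟨i, hi⟩ := (Set.ne_univ_iff_exists_notMem G).1 (hU G hG)
    have hik : i ≠ k := fun h => hi (h ▸ hkG)
    refine ⟨i, hi, fun c s => if i ∈ J then c (e ⟨i, hik⟩) else c (e ⟨i, hik⟩) + s ⟨k, hkG⟩,
      fun x => ?_⟩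
    by_cases hiJ : i ∈ J <;> simp [hiJ]
  by_cases hGJ : G ⊆ J
  · -- Some `i ∈ J \ G` exists, and `x i` is sent uncoded.
    obtain ⟨i, hiJ, hiG⟩ : ∃ i ∈ J, i ∉ G := by
      by_contra! h
      exact hJU (hGJ.antisymm h ▸ hG)
    have hik : i ≠ k := fun h => hk (h ▸ hiJ)
    exact ⟨i, hiG, fun c _ => c (e ⟨i, hik⟩), fun x => by simp [hiJ]⟩
  · -- A known `x g` with `g ∉ J` reveals `x k` through `x g - x k`.
    obtain ⟨g, hgG, hgJ⟩ := Set.not_subset.1 hGJ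
    have hgk : g ≠ k := fun h => hkG (h ▸ hgG)
    exact ⟨k, hkG, fun c s => s ⟨g, hgG⟩ - c (e ⟨g, hgk⟩), fun x => by simp [hgJ]⟩

/-- Exactly one nested absent pair: if there is exactly one ordered pair
(J, K) of distinct absent receivers with J ⊊ K, then β_q(P(m,U)) = m − 1. -/
theorem pliableRate_eq_m_sub_one_of_one_nested_absent_pair
    (F : Type) [Field F] [Fintype F] (m : ℕ) (U : Set (Set (Fin m)))
    (hU : ∀ H ∈ U, H ≠ Set.univ)
    (hpair : ∃! p : Set (Fin m) × Set (Fin m),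
      p.1 ∈ {H : Set (Fin m) | H ≠ Set.univ ∧ H ∉ U} ∧
      p.2 ∈ {H : Set (Fin m) | H ≠ Set.univ ∧ H ∉ U} ∧ p.1 ⊂ p.2) :
    pliableRate F m U = m - 1 := by
  classical
  obtain ⟨⟨J, K⟩, ⟨⟨hJ, hJU⟩, ⟨hK, -⟩, hJK⟩, huniq⟩ := hpair
  have hcode := exists_code_of_absent F hU hJ hJU
  refine le_antisymm (Nat.sInf_le hcode) (le_csInf ⟨m - 1, hcode⟩ ?_)
  rintro ℓ ⟨E, hE⟩
  obtain ⟨a, ha⟩ := exists_single_reveal hE hK hJK fun S T hS hSU hT hTU hST =>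
    Prod.ext_iff.1 (huniq (S, T) ⟨⟨hS, hSU⟩, ⟨hT, hTU⟩, hST⟩)
  have hinj : Function.Injective fun x : Fin m → F => (E x, x a) := by
    intro x y hxy
    obtain ⟨hc, hxa⟩ := Prod.ext_iff.1 hxy
    funext j
    have hj : j ∈ determined E {a} := ha ▸ Set.mem_univ j
    exact hj x y hc (by rintro _ rfl; exact hxa)
  have hcard := Fintype.card_le_of_injective _ hinj
  rw [Fintype.card_prod, Fintype.card_fun, Fintype.card_fun, Fintype.card_fin, Fintype.card_fin,
    ← pow_succ, Nat.pow_le_pow_iff_right Fintype.one_lt_card] at hcard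
  omega
end

section
/- (Removing side information can increase or decrease the rate) There exist pliable-index-coding problems P(m,U₁) and P(m,U₂), receivers H₁ ∈ U₁ and H₂ ∈ U₂, and messages j₁ ∈ H₁ and j₂ ∈ H₂, such that with U₁' = (U₁ \ {H₁}) ∪ {H₁ \ {j₁}} and U₂' = (U₂ \ {H₂}) ∪ {H₂ \ {j₂}}, one has β_q(P(m,U₁')) < β_q(P(m,U₁)) and β_q(P(m,U₂')) > β_q(P(m,U₂)) for every field size q. That is, removing a message from the side information of a present receiver may strictly decrease, and may strictly increase, the optimal broadcast rate. -/
/-- If the receiver without side information is present and every message is known to some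
receiver, then one transmission is not enough. -/
theorem two_le_pliableRate (F : Type) [Field F] [Fintype F] {m : ℕ} (U : Set (Set (Fin m)))
    (huniv : ∀ H ∈ U, H ≠ Set.univ) (hempty : ∅ ∈ U) (hcover : ∀ i, ∃ H ∈ U, i ∈ H) :
    2 ≤ pliableRate F m U := by
  -- Sending all messages is a valid code, so the infimum is not the junk value of `sInf ∅`.
  have hne : {ℓ : ℕ | ∃ E : (Fin m → F) → Fin ℓ → F, IsPliableCode F U E}.Nonempty := by
    refine ⟨m, fun x => x, fun H hH => ?_⟩
    obtain ⟨i, hi⟩ := (Set.ne_univ_iff_exists_notMem H).1 (huniv H hH)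
    exact ⟨i, hi, fun c _ => c i, fun x => rfl⟩
  refine le_csInf hne ?_
  rintro ℓ ⟨E, hE⟩
  by_contra! hℓ
  obtain ⟨i, -, dec, hdec⟩ := hE ∅ hempty
  let g : (Fin ℓ → F) → F := fun c => dec c (fun j => j.2.elim)
  have hg (x : Fin m → F) : g (E x) = x i := by
    rw [← hdec x]
    exact congrArg (dec (E x)) (funext fun j => j.2.elim)
  have hsurj : Function.Surjective g := fun a => ⟨E (fun _ => a), hg _⟩
  have hcard : Nat.card (Fin ℓ → F) ≤ Nat.card F := by
    rw [Nat.card_fun, Nat.card_fin]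
    calc Nat.card F ^ ℓ ≤ Nat.card F ^ 1 := Nat.pow_le_pow_right Nat.card_pos (by omega)
      _ = Nat.card F := pow_one _
  have hinj : Function.Injective g := (hsurj.bijective_of_nat_card_le hcard).injective
  obtain ⟨H, hH, hiH⟩ := hcover i
  obtain ⟨k, hkH, dec', hdec'⟩ := hE H hH
  -- The messages `0` and `Pi.single k 1` agree on `H`, hence have the same codeword.
  have hagree (j : Fin m) (hj : j ∈ H) : (Pi.single k 1 : Fin m → F) j = (0 : Fin m → F) j :=
    Pi.single_eq_of_ne (fun h : j = k => hkH (h ▸ hj)) 1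
  have hcode : E (Pi.single k 1) = E 0 := hinj (by rw [hg, hg, hagree i hiH])
  have h1 := hdec' (Pi.single k 1)
  rw [hcode, show (fun j : H => (Pi.single k 1 : Fin m → F) j.1) = fun j : H => (0 : Fin m → F) j.1
    from funext fun j => hagree j.1 j.2, hdec' 0] at h1
  simp at h1

/-- removing a message from the side information of a present receiver may
strictly decrease (problem U₁, receiver H₁, message j₁) and may strictly increase
(problem U₂, receiver H₂, message j₂) the optimal broadcast rate, for every field. -/
theorem removing_side_information_can_increase_or_decrease_rate :
    ∃ (m : ℕ) (U₁ U₂ : Set (Set (Fin m))) (H₁ H₂ : Set (Fin m)) (j₁ j₂ : Fin m),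
      (∀ H ∈ U₁, H ≠ Set.univ) ∧ (∀ H ∈ U₂, H ≠ Set.univ) ∧
      H₁ ∈ U₁ ∧ H₂ ∈ U₂ ∧ j₁ ∈ H₁ ∧ j₂ ∈ H₂ ∧
      ∀ (F : Type) [Field F] [Fintype F],
        pliableRate F m ((U₁ \ {H₁}) ∪ {H₁ \ {j₁}}) < pliableRate F m U₁ ∧
        pliableRate F m U₂ < pliableRate F m ((U₂ \ {H₂}) ∪ {H₂ \ {j₂}}) := by
  have n0 : ({0} : Set (Fin 3)) ≠ Set.univ :=
    (Set.ne_univ_iff_exists_notMem _).2 ⟨1, by simp⟩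
  have n1 : ({1} : Set (Fin 3)) ≠ Set.univ :=
    (Set.ne_univ_iff_exists_notMem _).2 ⟨0, by simp⟩
  have n02 : ({0, 2} : Set (Fin 3)) ≠ Set.univ :=
    (Set.ne_univ_iff_exists_notMem _).2 ⟨1, by simp⟩
  have h₁ : ∀ H ∈ ({∅, {1}, {0, 2}} : Set (Set (Fin 3))), H ≠ Set.univ := by
    rintro H (rfl | rfl | rfl)
    exacts [Set.empty_ne_univ, n1, n02]
  have h₂ : ∀ H ∈ ({{0}, {1}, {0, 2}} : Set (Set (Fin 3))), H ≠ Set.univ := by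
    rintro H (rfl | rfl | rfl)
    exacts [n0, n1, n02]
  have e₂ : (({{0}, {1}, {0, 2}} : Set (Set (Fin 3))) \ {{0}}) ∪ {{0} \ {0}}
      = {∅, {1}, {0, 2}} := by
    have a : ({1} : Set (Fin 3)) ≠ {0} := by simp
    have b : ({0, 2} : Set (Fin 3)) ≠ {0} := fun h => by
      have h2 : (2 : Fin 3) ∈ ({0, 2} : Set (Fin 3)) := by simp
      rw [h] at h2
      simp at h2
    ext H
    simp only [Set.mem_union, Set.mem_sdiff, Set.mem_insert_iff, Set.mem_singleton_iff,
      Set.sdiff_self]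
    grind
  refine ⟨3, {∅, {1}, {0, 2}}, {{0}, {1}, {0, 2}}, {0, 2}, {0}, 0, 0, h₁, h₂,
    by simp, by simp, by simp, by simp, fun F _ _ => ?_⟩
  have hlow : 2 ≤ pliableRate F 3 {∅, {1}, {0, 2}} := by
    refine two_le_pliableRate F _ h₁ (by simp) fun i => ?_
    fin_cases i
    exacts [⟨{0, 2}, by simp, by simp⟩, ⟨{1}, by simp, by simp⟩, ⟨{0, 2}, by simp, by simp⟩]
  rw [e₂]
  constructor
  · refine lt_of_le_of_lt (Nat.sInf_le ⟨fun x _ => x 0, fun H hH => ?_⟩) hlow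
    refine ⟨0, ?_, fun c _ => c 0, fun x => rfl⟩
    rcases hH with ⟨rfl | rfl | rfl, hne⟩ | rfl
    · simp
    · simp
    · exact absurd rfl hne
    · simp
  · refine lt_of_le_of_lt (Nat.sInf_le ⟨fun x _ => x 0 + x 1, fun H hH => ?_⟩) hlow
    rcases hH with rfl | rfl | rfl
    · exact ⟨1, by simp, fun c s => c 0 - s ⟨0, by simp⟩, fun x => by simp⟩
    · exact ⟨0, by simp, fun c s => c 0 - s ⟨1, by simp⟩, fun x => by simp⟩
    · exact ⟨1, by simp, fun c s => c 0 - s ⟨0, by simp⟩, fun x => by simp⟩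
end

section
/- Let m = 5 and let U₁ = 2^{[1:5]} \ {[1:5], {1,2,3}, {3}, {3,4}}, i.e., the absent receivers are exactly {1,2,3}, {3}, and {3,4}. Then for every field size q, β_q(P(5,U₁)) = 4. -/
/-- No absent receiver contains message `4`, so the codeword and message `4`
together determine all messages. -/
theorem injective_of_isPliableCode {F : Type} [Field F] {ι : Type}
    {E : (Fin 5 → F) → ι → F}
    (hE : IsPliableCode F
      ({H : Set (Fin 5) | H ≠ Set.univ} \ {({0,1,2} : Set (Fin 5)), {2}, {2,3}}) E) :
    Function.Injective (fun x : Fin 5 → F => (E x, x 4)) := by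
  set S : Set (Fin 5) := {j | ∀ x y : Fin 5 → F, E x = E y → x 4 = y 4 → x j = y j} with hS
  have h4 : (4 : Fin 5) ∈ S := fun x y _ h => h
  have hU : S = Set.univ := by
    by_contra hne
    have hmem : S ∈ ({H : Set (Fin 5) | H ≠ Set.univ} \
        {({0,1,2} : Set (Fin 5)), {2}, {2,3}}) := by
      refine ⟨hne, ?_⟩
      rintro (h | h | h) <;> rw [h] at h4 <;> simp at h4
    obtain ⟨i, hi, dec, hdec⟩ := hE S hmem
    apply hi
    intro x y hxy hx4
    rw [← hdec x, ← hdec y, hxy]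
    congr 1
    funext j
    exact j.2 x y hxy hx4
  intro x y hxy
  obtain ⟨h1, h2⟩ := Prod.mk.inj hxy
  funext j
  have hj : j ∈ S := hU ▸ Set.mem_univ j
  exact hj x y h1 h2

theorem isPliableCode_four (F : Type) [Field F] :
    IsPliableCode F
      ({H : Set (Fin 5) | H ≠ Set.univ} \ {({0,1,2} : Set (Fin 5)), {2}, {2,3}})
      (fun x : Fin 5 → F => ![x 2, x 3, x 0 - x 4, x 1 - x 4]) := by
  rintro H ⟨hne, habs⟩
  by_cases h2 : (2 : Fin 5) ∈ H
  swap
  · exact ⟨2, h2, fun c _ => c 0, fun x => by simp⟩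
  by_cases h3 : (3 : Fin 5) ∈ H
  swap
  · exact ⟨3, h3, fun c _ => c 1, fun x => by simp⟩
  by_cases h4 : (4 : Fin 5) ∈ H
  · by_cases h0 : (0 : Fin 5) ∈ H
    swap
    · exact ⟨0, h0, fun c s => c 2 + s ⟨4, h4⟩, fun x => by simp⟩
    by_cases h1 : (1 : Fin 5) ∈ H
    swap
    · exact ⟨1, h1, fun c s => c 3 + s ⟨4, h4⟩, fun x => by simp⟩
    exact absurd (Set.eq_univ_of_forall fun j => by fin_cases j <;> assumption) hne
  · by_cases h0 : (0 : Fin 5) ∈ H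
    · exact ⟨4, h4, fun c s => s ⟨0, h0⟩ - c 2, fun x => by simp⟩
    by_cases h1 : (1 : Fin 5) ∈ H
    · exact ⟨4, h4, fun c s => s ⟨1, h1⟩ - c 3, fun x => by simp⟩
    refine absurd (Or.inr (Or.inr ?_)) habs
    change H = {2, 3}
    ext j
    fin_cases j <;> simp [h0, h1, h2, h3, h4]

/-- for m = 5 (messages indexed 0,…,4 standing for 1,…,5) with absent
receivers exactly {1,2,3}, {3} and {3,4}, the optimal broadcast rate is 4 for every field size. -/
theorem example_rate_four_U1 (F : Type) [Field F] [Fintype F] :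
    pliableRate F 5
      ({H : Set (Fin 5) | H ≠ Set.univ} \ {({0,1,2} : Set (Fin 5)), {2}, {2,3}})
      = 4 := by
  apply le_antisymm
  · exact Nat.sInf_le ⟨_, isPliableCode_four F⟩
  · refine le_csInf ⟨4, _, isPliableCode_four F⟩ ?_
    rintro ℓ ⟨E, hE⟩
    classical
    have h := Fintype.card_le_of_injective _ (injective_of_isPliableCode hE)
    simp only [Fintype.card_prod, Fintype.card_fun, Fintype.card_fin, ← pow_succ] at h
    have := (Nat.pow_le_pow_iff_right (Fintype.one_lt_card (α := F))).1 h
    omega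
end

section
/- Let m = 5 and let U₂ = 2^{[1:5]} \ {[1:5], {1,2,3}, {3}, {3,4,5}}, i.e., the absent receivers are exactly {1,2,3}, {3}, and {3,4,5}. Then for every field size q, β_q(P(5,U₂)) = 3. -/
/-- The known messages `H` together with the codeword and at most `n` further messages `G`
determine the whole message vector. -/
def DeterminedWith {F : Type} {m : ℕ} {ι : Type} (E : (Fin m → F) → ι → F)
    (n : ℕ) (H : Finset (Fin m)) : Prop :=
  ∃ G : Finset (Fin m), G.card ≤ n ∧ ∀ x y : Fin m → F, E x = E y →
    (∀ j ∈ H, x j = y j) → (∀ j ∈ G, x j = y j) → x = y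

/-- The largest number of absent receivers in a chain of supersets of `H`. -/
def absentHeight (H : Finset (Fin 5)) : ℕ :=
  if H ⊆ {2} then 2 else if H ⊆ {0, 1, 2} ∨ H ⊆ {2, 3, 4} then 1 else 0

theorem absentHeight_insert_le (i : Fin 5) (H : Finset (Fin 5)) :
    absentHeight (insert i H) ≤ absentHeight H := by
  revert i H; decide

theorem absentHeight_insert_lt (i : Fin 5) (H : Finset (Fin 5)) (hi : i ∉ H)
    (hH : H = {0, 1, 2} ∨ H = {2} ∨ H = {2, 3, 4}) :
    absentHeight (insert i H) + 1 ≤ absentHeight H := by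
  revert i H; decide

theorem determinedWith_absentHeight {F : Type} [Field F] {ι : Type}
    {E : (Fin 5 → F) → ι → F}
    (hE : IsPliableCode F
      ({H : Set (Fin 5) | H ≠ Set.univ} \ {({0,1,2} : Set (Fin 5)), {2}, {2,3,4}}) E)
    (H : Finset (Fin 5)) : DeterminedWith E (absentHeight H) H := by
  by_cases hu : H = Finset.univ
  · subst hu
    exact ⟨∅, by simp, fun x y _ h _ => funext fun j => h j (Finset.mem_univ j)⟩
  by_cases ha : H = {0, 1, 2} ∨ H = {2} ∨ H = {2, 3, 4}
  · obtain ⟨i, hi⟩ : ∃ i, i ∉ H := by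
      by_contra! h
      exact hu (Finset.eq_univ_iff_forall.2 h)
    obtain ⟨G, hG, hdet⟩ := determinedWith_absentHeight hE (insert i H)
    refine ⟨insert i G, (Finset.card_insert_le _ _).trans
      ((Nat.succ_le_succ hG).trans (absentHeight_insert_lt i H hi ha)), ?_⟩
    intro x y hxy hH hiG
    rw [Finset.forall_mem_insert] at hiG
    exact hdet x y hxy (Finset.forall_mem_insert _ _ _ |>.2 ⟨hiG.1, hH⟩) hiG.2
  · have hmem : (H : Set (Fin 5)) ∈
        ({H : Set (Fin 5) | H ≠ Set.univ} \ {({0,1,2} : Set (Fin 5)), {2}, {2,3,4}}) := by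
      refine ⟨fun h => hu (Finset.coe_eq_univ.1 h), fun h => ha ?_⟩
      rcases h with h | h | h
      · exact Or.inl (Finset.coe_injective (by simpa using h))
      · exact Or.inr (Or.inl (Finset.coe_injective (by simpa using h)))
      · refine Or.inr (Or.inr (Finset.coe_injective ?_))
        rw [Set.mem_singleton_iff] at h
        simpa using h
    obtain ⟨i, hi, dec, hdec⟩ := hE _ hmem
    have hi : i ∉ H := hi
    obtain ⟨G, hG, hdet⟩ := determinedWith_absentHeight hE (insert i H)
    refine ⟨G, hG.trans (absentHeight_insert_le i H), ?_⟩
    intro x y hxy hH hG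
    refine hdet x y hxy (Finset.forall_mem_insert _ _ _ |>.2 ⟨?_, hH⟩) hG
    rw [← hdec x, ← hdec y, hxy]
    congr 1
    exact funext fun j => hH j.1 j.2
termination_by Hᶜ.card
decreasing_by
  all_goals
    exact Finset.card_lt_card
      (Finset.compl_ssubset_compl.2 (Finset.ssubset_insert hi))

/-- The codeword and `n` messages take at most `q ^ (ℓ + n)` values. -/
theorem le_of_determinedWith_empty {F : Type} [Field F] [Fintype F] {m ℓ n : ℕ}
    {E : (Fin m → F) → Fin ℓ → F} (h : DeterminedWith E n ∅) : m ≤ ℓ + n := by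
  classical
  obtain ⟨G, hG, hdet⟩ := h
  have hinj : Function.Injective
      (fun x : Fin m → F => (E x, fun j : G => x j.1)) := by
    intro x y hxy
    obtain ⟨h1, h2⟩ := Prod.mk.inj hxy
    exact hdet x y h1 (by simp) fun j hj => congrFun h2 ⟨j, hj⟩
  have hcard := Fintype.card_le_of_injective _ hinj
  simp only [Fintype.card_prod, Fintype.card_fun, Fintype.card_fin, Fintype.card_coe,
    ← pow_add] at hcard
  have := (Nat.pow_le_pow_iff_right (Fintype.one_lt_card (α := F))).1 hcard
  omega

theorem isPliableCode_pairSums (F : Type) [Field F] :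
    IsPliableCode F
      ({H : Set (Fin 5) | H ≠ Set.univ} \ {({0,1,2} : Set (Fin 5)), {2}, {2,3,4}})
      (fun x : Fin 5 → F => ![x 2, x 0 + x 1, x 3 + x 4]) := by
  rintro H ⟨hu, ha⟩
  by_cases h2 : (2 : Fin 5) ∉ H
  · exact ⟨2, h2, fun c _ => c 0, fun x => by simp⟩
  rw [not_not] at h2
  by_cases h0 : (0 : Fin 5) ∈ H <;> by_cases h1 : (1 : Fin 5) ∈ H
  all_goals by_cases h3 : (3 : Fin 5) ∈ H <;> by_cases h4 : (4 : Fin 5) ∈ H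
  all_goals first
    | exact ⟨1, h1, fun c s => c 1 - s ⟨0, h0⟩, fun x => by simp⟩
    | exact ⟨0, h0, fun c s => c 1 - s ⟨1, h1⟩, fun x => by simp⟩
    | exact ⟨4, h4, fun c s => c 2 - s ⟨3, h3⟩, fun x => by simp⟩
    | exact ⟨3, h3, fun c s => c 2 - s ⟨4, h4⟩, fun x => by simp⟩
    | exfalso
  -- Each of `{0, 1}` and `{3, 4}` is now contained in `H` or disjoint from it.
  · exact hu (by ext i; fin_cases i <;> simp [*])
  · exact ha (Or.inl (by ext i; fin_cases i <;> simp [*]))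
  · exact ha (Or.inr (Or.inr (by
      rw [Set.mem_singleton_iff]; ext i; fin_cases i <;> simp [*])))
  · exact ha (Or.inr (Or.inl (by ext i; fin_cases i <;> simp [*])))

/-- for m = 5 (messages indexed 0,…,4 standing for 1,…,5) with absent
receivers exactly {1,2,3}, {3} and {3,4,5}, the optimal broadcast rate is 3 for every field size. -/
theorem example_rate_three_U2 (F : Type) [Field F] [Fintype F] :
    pliableRate F 5
      ({H : Set (Fin 5) | H ≠ Set.univ} \ {({0,1,2} : Set (Fin 5)), {2}, {2,3,4}})
      = 3 := by
  have hmem := isPliableCode_pairSums F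
  refine le_antisymm (Nat.sInf_le ⟨_, hmem⟩) (le_csInf ⟨3, _, hmem⟩ ?_)
  rintro ℓ ⟨E, hE⟩
  have h := le_of_determinedWith_empty (determinedWith_absentHeight hE ∅)
  have h2 : absentHeight ∅ = 2 := by decide
  omega
end
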